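/- Let G = (V, E) be a finite directed acyclic graph with n vertices. Then the vertex set V can be partitioned into at most 3·⌈√n⌉ pairwise disjoint sets, each of which is either a chain of G or an antichain of G. -/

import Mathlib

/-- A chain of the DAG `(V, E)`: a set of vertices that is traced out by a
directed path (a duplicate-free list whose consecutive elements are joined by edges). -/
def IsDagChain {V : Type*} (E : V → V → Prop) (S : Set V) : Prop :=
  ∃ l : List V, l.Nodup ∧ l.Chain' E ∧ {x | x ∈ l} = S

/-- An antichain of the DAG `(V, E)`: a set of vertices with no edge between any two of them. -/
def IsDagAntichain {V : Type*} (E : V → V → Prop) (S : Set V) : Prop :=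
  ∀ x ∈ S, ∀ y ∈ S, ¬ E x y

/-!
Induct on `k` to show that fewer than `(k + 1) (k + 2) / 2` vertices can be split into `k` parts.
Either some path has at least `k + 1` vertices, and removing it leaves fewer than `k (k + 1) / 2`
vertices for the other `k - 1` parts; or every path has at most `k` vertices, and repeatedly
removing the sources exhausts the vertices in at most `k` antichains. With `n` vertices,
`k = ⌈√(2 n)⌉ ≤ 3 ⌈√n⌉` is large enough.
-/

/-- `S` is the union of `k` pairwise disjoint sets, each a chain or an antichain of the digraph `E`.
The parts are indexed by `Fin k` and may be empty. -/
def HasDagPartition {V : Type*} (E : V → V → Prop) (S : Set V) (k : ℕ) : Prop :=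
  ∃ F : Fin k → Set V,
    (∀ i, IsDagChain E (F i) ∨ IsDagAntichain E (F i)) ∧
    (∀ i j, i ≠ j → Disjoint (F i) (F j)) ∧
    (⋃ i, F i) = S

section

variable {V : Type*} {E : V → V → Prop}

theorem hasDagPartition_empty : HasDagPartition E ∅ 0 :=
  ⟨Fin.elim0, fun i => i.elim0, fun i => i.elim0, Set.iUnion_of_empty _⟩

theorem HasDagPartition.of_sdiff {S A : Set V} {k : ℕ} (hAS : A ⊆ S)
    (hA : IsDagChain E A ∨ IsDagAntichain E A) (h : HasDagPartition E (S \ A) k) :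
    HasDagPartition E S (k + 1) := by
  obtain ⟨F, hF, hdisj, hunion⟩ := h
  have hAF (i : Fin k) : Disjoint A (F i) :=
    Set.disjoint_sdiff_right.mono_right (hunion ▸ Set.subset_iUnion F i)
  refine ⟨Fin.cons A F, Fin.cases hA hF, ?_, ?_⟩
  · intro i j hij
    cases i using Fin.cases <;> cases j using Fin.cases
    · exact absurd rfl hij
    · exact hAF _
    · exact (hAF _).symm
    · exact hdisj _ _ (ne_of_apply_ne Fin.succ hij)
  · calc ⋃ i, (Fin.cons A F : Fin (k + 1) → Set V) i = A ∪ ⋃ i, F i := by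
          ext v
          simp only [Set.mem_iUnion, Set.mem_union, Fin.exists_fin_succ, Fin.cons_zero,
            Fin.cons_succ]
      _ = S := by rw [hunion, Set.union_sdiff_cancel hAS]

theorem hasDagPartition_of_forall_length_le {S : Set V} {k : ℕ}
    (h : ∀ l : List V, l.IsChain E → {x | x ∈ l} ⊆ S → l.length ≤ k) :
    HasDagPartition E S k := by
  induction k generalizing S with
  | zero =>
    have hS : S = ∅ := Set.eq_empty_of_forall_notMem fun v hv => by
      simpa using h [v] (List.isChain_singleton v) (by simpa using hv)
    exact hS ▸ hasDagPartition_empty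
  | succ k ih =>
    let sources : Set V := {v ∈ S | ∀ u ∈ S, ¬ E u v}
    have hsources : IsDagAntichain E sources := fun u hu v hv => hv.2 u hu.1
    refine .of_sdiff (Set.sep_subset _ _) (.inr hsources) (ih fun l hl hlS => ?_)
    cases l with
    | nil => exact Nat.zero_le k
    | cons v l =>
      -- A path that avoids the sources can be extended backwards inside `S`.
      have hv : v ∈ S \ sources := hlS List.mem_cons_self
      obtain ⟨u, huS, huv⟩ : ∃ u ∈ S, E u v := by
        by_contra! hno
        exact hv.2 ⟨hv.1, hno⟩
      have hpathS : {x | x ∈ u :: v :: l} ⊆ S := by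
        rintro x (_ | ⟨_, hx⟩)
        exacts [huS, (hlS hx).1]
      exact Nat.le_of_succ_le_succ (h (u :: v :: l) (hl.cons_cons huv) hpathS)

theorem nodup_of_isChain_of_acyclic (hacyc : ∀ v : V, ¬ Relation.TransGen E v v) {l : List V}
    (hl : l.IsChain E) : l.Nodup := by
  have : Std.Irrefl (Relation.TransGen E) := ⟨hacyc⟩
  have hpath : l.Pairwise (Relation.TransGen E) := (hl.imp fun _ _ => .single).pairwise
  exact hpath.nodup

theorem hasDagPartition_of_two_mul_card_lt (hacyc : ∀ v : V, ¬ Relation.TransGen E v v)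
    {S : Finset V} {k : ℕ} (hS : 2 * S.card < (k + 1) * (k + 2)) : HasDagPartition E S k := by
  classical
  induction k generalizing S with
  | zero =>
    obtain rfl : S = ∅ := Finset.card_eq_zero.1 (by omega)
    exact Finset.coe_empty ▸ hasDagPartition_empty
  | succ k ih =>
    by_cases! hshort : ∀ l : List V, l.IsChain E → {x | x ∈ l} ⊆ (S : Set V) → l.length ≤ k + 1
    · exact hasDagPartition_of_forall_length_le hshort
    obtain ⟨l, hl, hlS, hlen⟩ := hshort
    have hnodup := nodup_of_isChain_of_acyclic hacyc hl
    have hcard : (S \ l.toFinset).card + l.length = S.card := by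
      rw [← List.toFinset_card_of_nodup hnodup]
      exact Finset.card_sdiff_add_card_eq_card fun x hx => hlS (List.mem_toFinset.1 hx)
    have hrest : HasDagPartition E (S \ l.toFinset : Finset V) k := ih (by nlinarith)
    rw [Finset.coe_sdiff, List.coe_toFinset] at hrest
    exact hrest.of_sdiff hlS (.inl ⟨l, hnodup, hl, rfl⟩)

end

theorem ceil_sqrt_two_mul_le (n : ℕ) : ⌈√(2 * n)⌉₊ ≤ 3 * ⌈√n⌉₊ := by
  refine Nat.ceil_le.2 ?_
  push_cast
  calc √(2 * n) ≤ √(3 ^ 2 * n) := by gcongr; norm_num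
    _ = 3 * √n := by simp
    _ ≤ 3 * ⌈√n⌉₊ := by gcongr; exact Nat.le_ceil _

theorem stmt2_general {V : Type*} (E : V → V → Prop)
    (hacyc : ∀ v : V, ¬ Relation.TransGen E v v) (S : Finset V) :
    HasDagPartition E S ⌈√(2 * S.card)⌉₊ := by
  have hcard : 2 * S.card ≤ ⌈√(2 * S.card)⌉₊ ^ 2 := by
    exact_mod_cast Real.sqrt_le_left (Nat.cast_nonneg _) |>.1 (Nat.le_ceil √(2 * S.card))
  exact hasDagPartition_of_two_mul_card_lt hacyc (by nlinarith)

theorem stmt2 {V : Type*} [Fintype V] (E : V → V → Prop)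
    (hacyc : ∀ v : V, ¬ Relation.TransGen E v v)
    (n : ℕ) (hn : Fintype.card V = n) :
    ∃ (k : ℕ) (F : Fin k → Set V),
      k ≤ 3 * ⌈Real.sqrt n⌉₊ ∧
      (∀ i, IsDagChain E (F i) ∨ IsDagAntichain E (F i)) ∧
      (∀ i j, i ≠ j → Disjoint (F i) (F j)) ∧
      (⋃ i, F i) = Set.univ := by
  obtain ⟨F, hF⟩ := stmt2_general E hacyc Finset.univ
  exact ⟨_, F, hn ▸ ceil_sqrt_two_mul_le _, by simpa using hF⟩
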